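/- arXiv:2502.04146 — 2 statements merged into one kernel-verified Lean document; each statement's English description precedes it below -/
import Mathlib

section
/- Let (U, φ) be a finite standard closure space with modular closure lattice, and let C be a non-join-irreducible essential closed set with predecessors C_1, …, C_m and C_* = ⋂_{i=1}^m C_i. Then a pseudo-closed set of the form P = C_i ∪ C_j spanning C is faulty (i.e., the closure of P under the E-base is strictly contained in C) if and only if there exists an index k with C_k ∉ {C_i, C_j} and |C_k \ C_*| > 1. -/
/-! Write `D = Ci ∩ Cj`. The crux is that every predecessor of `C` contains `D`. If `K` did not,
then by modularity `K` would be the join of `Ci ∩ K` and `Cj ∩ K`, hence contained in the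
quasi-closed set `Ci ∪ Cj`. For `z ∈ C \ (Ci ∪ Cj)`, the join `W` of `D` and `φ {z}` is not `C`: by
standardness and modularity `W` is not a join of two smaller closed sets containing `D`, whereas
`C` is the join of `Ci` and `Cj`. So `W` meets `Ci` and `Cj` in `D`, whence `W ∩ K ⊆ D`; but
modularity makes `W` the join of `D` and `W ∩ K`, a contradiction.

Hence `D = C_*` and, by modularity again, `[C_*, C]` has length two: distinct predecessors of `C`
meet in `C_*`. Deleting `K \ C_*` from `C`, for a predecessor `K`, therefore leaves a set that
contains the closures of all its subsets not spanning `C`. Let `x ∈ K \ C_*` with `K ≠ Ci, Cj`. If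
`K \ C_* = {x}`, every D-generator of `x` inside `C` spans `C`, so all of them are E-generators, in
particular one inside `Ci ∪ Cj`. If there is `z ≠ x` in `K \ C_*`, then `C_* ∪ {z}` spans `K` and
yields a D-generator of `x` inside `K`, so no E-generator of `x` spans `C`; the E-closure of
`Ci ∪ Cj` then misses all of `K \ C_*`.
-/

namespace EBaseFormal

open Set

variable {α : Type*}

/-- `φ` is a closure operator on subsets of `α`. -/
def IsClosureOp (φ : Set α → Set α) : Prop :=
  (∀ X, X ⊆ φ X) ∧ (∀ X, φ (φ X) = φ X) ∧ ∀ X Y : Set α, X ⊆ Y → φ X ⊆ φ Y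

/-- `C` is a closed set of the closure space. -/
def IsClosedSet (φ : Set α → Set α) (C : Set α) : Prop :=
  φ C = C

/-- The closure space is standard: `φ {x} \ {x}` is closed for every `x`. -/
def IsStandard (φ : Set α → Set α) : Prop :=
  ∀ x : α, IsClosedSet φ (φ {x} \ {x})

/-- The binary part `φ^b` of the closure operator. -/
def binPart (φ : Set α → Set α) (X : Set α) : Set α :=
  ⋃ x ∈ X, φ {x}

/-- `A` is a D-generator of `x`. -/
def IsDGen (φ : Set α → Set α) (x : α) (A : Set α) : Prop :=
  x ∈ φ A ∧ x ∉ binPart φ A ∧ ∀ B : Set α, binPart φ B ⊂ binPart φ A → x ∉ φ B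

/-- `A` is an E-generator of `x`: a D-generator whose closure is inclusion-minimal
among the closures of D-generators of `x`. -/
def IsEGen (φ : Set α → Set α) (x : α) (A : Set α) : Prop :=
  IsDGen φ x A ∧ ∀ B : Set α, IsDGen φ x B → φ B ⊆ φ A → φ B = φ A

/-- The E-base of the closure space: all valid nontrivial binary implications
together with the implications `A → {x}` for `A` an E-generator of `x`. -/
def EBase (φ : Set α → Set α) : Set (Set α × Set α) :=
  {p | ∃ a x : α, p = ({a}, {x}) ∧ x ∈ φ {a} ∧ x ≠ a} ∪
    {p | ∃ (x : α) (A : Set α), p = (A, {x}) ∧ IsEGen φ x A}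

/-- `Y` satisfies all implications of `S`. -/
def ImpClosedSet (S : Set (Set α × Set α)) (Y : Set α) : Prop :=
  ∀ p ∈ S, p.1 ⊆ Y → p.2 ⊆ Y

/-- The closure of `Z` under the implications in `S`: the smallest set containing
`Z` satisfying all implications of `S`. -/
def ImpClosure (S : Set (Set α × Set α)) (Z : Set α) : Set α :=
  ⋂₀ {Y : Set α | Z ⊆ Y ∧ ImpClosedSet S Y}

/-- The E-base is valid: its induced closure operator is `φ`. -/
def EBaseValid (φ : Set α → Set α) : Prop :=
  ∀ Z : Set α, ImpClosure (EBase φ) Z = φ Z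

/-- `Q` is quasi-closed. -/
def QuasiClosed (φ : Set α → Set α) (Q : Set α) : Prop :=
  ∀ X ⊆ Q, φ X ⊂ φ Q → φ X ⊆ Q

/-- `P` is pseudo-closed: non-closed and inclusion-minimal among the quasi-closed
sets spanning `φ P`. -/
def PseudoClosed (φ : Set α → Set α) (P : Set α) : Prop :=
  ¬ IsClosedSet φ P ∧ QuasiClosed φ P ∧
    ∀ Q : Set α, QuasiClosed φ Q → φ Q = φ P → Q ⊆ P → Q = P

/-- `C` is an essential closed set. -/
def Essential (φ : Set α → Set α) (C : Set α) : Prop :=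
  IsClosedSet φ C ∧ ∃ P : Set α, PseudoClosed φ P ∧ φ P = C

/-- The canonical (Duquenne–Guigues) base. -/
def DGBase (φ : Set α → Set α) : Set (Set α × Set α) :=
  {p | ∃ P : Set α, PseudoClosed φ P ∧ p = (P, φ P \ P)}

/-- `C'` is a predecessor (lower cover) of `C` in the closure lattice. -/
def Predecessor (φ : Set α → Set α) (C' C : Set α) : Prop :=
  IsClosedSet φ C' ∧ IsClosedSet φ C ∧ C' ⊂ C ∧
    ∀ C'' : Set α, IsClosedSet φ C'' → C' ⊂ C'' → C'' ⊆ C → C'' = C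

/-- The closure lattice is join-semidistributive. -/
def JoinSemidistrib (φ : Set α → Set α) : Prop :=
  ∀ C1 C2 C3 : Set α, IsClosedSet φ C1 → IsClosedSet φ C2 → IsClosedSet φ C3 →
    φ (C1 ∪ C2) = φ (C1 ∪ C3) → φ (C1 ∪ C2) = φ (C1 ∪ C2 ∩ C3)

/-- The closure lattice is meet-semidistributive. -/
def MeetSemidistrib (φ : Set α → Set α) : Prop :=
  ∀ C1 C2 C3 : Set α, IsClosedSet φ C1 → IsClosedSet φ C2 → IsClosedSet φ C3 →
    C1 ∩ C2 = C1 ∩ C3 → C1 ∩ C2 = C1 ∩ φ (C2 ∪ C3)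

/-- The closure lattice is semidistributive. -/
def Semidistrib (φ : Set α → Set α) : Prop :=
  JoinSemidistrib φ ∧ MeetSemidistrib φ

/-- The closure lattice is modular: `a ≤ b → (b ∧ c) ∨ a = b ∧ (c ∨ a)`. -/
def ModularLattice (φ : Set α → Set α) : Prop :=
  ∀ A B C : Set α, IsClosedSet φ A → IsClosedSet φ B → IsClosedSet φ C →
    A ⊆ B → φ (B ∩ C ∪ A) = B ∩ φ (C ∪ A)

/-- The closure lattice is atomistic (in a standard space). -/
def Atomistic (φ : Set α → Set α) : Prop :=
  ∀ x : α, φ {x} = ({x} : Set α)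

/-- The closure lattice is upper-semimodular. -/
def UpperSemimodular (φ : Set α → Set α) : Prop :=
  ∀ C1 C2 : Set α, IsClosedSet φ C1 → IsClosedSet φ C2 →
    Predecessor φ (C1 ∩ C2) C1 → Predecessor φ C2 (φ (C1 ∪ C2))

/-- The closure lattice is geometric: atomistic and upper-semimodular. -/
def Geometric (φ : Set α → Set α) : Prop :=
  Atomistic φ ∧ UpperSemimodular φ

/-- `x` is prime in the lattice `(↓C, ⊆)` of closed subsets of `C`. -/
def PrimeIn (φ : Set α → Set α) (C : Set α) (x : α) : Prop :=
  ∀ C1 C2 : Set α, IsClosedSet φ C1 → IsClosedSet φ C2 → C1 ⊆ C → C2 ⊆ C →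
    φ {x} ⊆ φ (C1 ∪ C2) → φ {x} ⊆ C1 ∨ φ {x} ⊆ C2

/-- `x ∈ C` is almost prime in `(↓C, ⊆)`. -/
def AlmostPrimeIn (φ : Set α → Set α) (C : Set α) (x : α) : Prop :=
  x ∈ C ∧ ¬ PrimeIn φ C x ∧
    ∀ C' : Set α, Predecessor φ C' C → x ∈ C' → PrimeIn φ C' x

/-- `A` is a `φ^b`-minimal spanning set of the closed set `C`. -/
def BMinSpanning (φ : Set α → Set α) (C A : Set α) : Prop :=
  φ A = C ∧ ∀ B : Set α, binPart φ B ⊂ binPart φ A → φ B ≠ C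

/-- `C` is join-irreducible: nonempty and whenever it is a join of two closed sets
it equals one of them. -/
def JoinIrred (φ : Set α → Set α) (C : Set α) : Prop :=
  IsClosedSet φ C ∧ C ≠ ∅ ∧
    ∀ C1 C2 : Set α, IsClosedSet φ C1 → IsClosedSet φ C2 →
      C = φ (C1 ∪ C2) → C = C1 ∨ C = C2

/-- `C` is join-irreducible: nonempty with a unique predecessor. -/
def JoinIrredUP (φ : Set α → Set α) (C : Set α) : Prop :=
  IsClosedSet φ C ∧ C ≠ ∅ ∧ ∃! C' : Set α, Predecessor φ C' C

/-- The set `C_*`, the intersection of the predecessors of `C`. It is all of `α` when `C` has no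
predecessor. -/
def lowerMeet (φ : Set α → Set α) (C : Set α) : Set α :=
  ⋂₀ {D : Set α | Predecessor φ D C}

/-- The interval `[C_*, C]` of the closure lattice has length two, expressed by saying that `C_*`
is covered by each predecessor of `C`; vacuous when `C` has no predecessor. -/
def HasLengthTwo (φ : Set α → Set α) (C : Set α) : Prop :=
  ∀ K : Set α, Predecessor φ K C → Predecessor φ (lowerMeet φ C) K

variable {φ : Set α → Set α} {A C D K L P X Z : Set α} {x z : α}

namespace IsClosureOp

theorem subset_closure (hφ : IsClosureOp φ) (X : Set α) : X ⊆ φ X :=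
  hφ.1 X

theorem isClosedSet_closure (hφ : IsClosureOp φ) (X : Set α) : IsClosedSet φ (φ X) :=
  hφ.2.1 X

theorem closure_subset (hφ : IsClosureOp φ) (hD : IsClosedSet φ D) (h : X ⊆ D) : φ X ⊆ D :=
  (hφ.2.2 X D h).trans hD.subset

theorem closure_singleton_subset (hφ : IsClosureOp φ) (hD : IsClosedSet φ D) (hx : x ∈ D) :
    φ {x} ⊆ D :=
  hφ.closure_subset hD (singleton_subset_iff.2 hx)

theorem mem_closure_singleton (hφ : IsClosureOp φ) (x : α) : x ∈ φ {x} :=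
  hφ.subset_closure {x} rfl

theorem isClosedSet_inter (hφ : IsClosureOp φ) (hC : IsClosedSet φ C) (hD : IsClosedSet φ D) :
    IsClosedSet φ (C ∩ D) :=
  (subset_inter (hφ.closure_subset hC inter_subset_left)
    (hφ.closure_subset hD inter_subset_right)).antisymm (hφ.subset_closure _)

theorem subset_binPart (hφ : IsClosureOp φ) (X : Set α) : X ⊆ binPart φ X :=
  fun x hx => mem_biUnion hx (hφ.mem_closure_singleton x)

theorem binPart_eq_self (hφ : IsClosureOp φ) (hD : IsClosedSet φ D) : binPart φ D = D :=
  Subset.antisymm (iUnion₂_subset fun _ hx => hφ.closure_singleton_subset hD hx)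
    (hφ.subset_binPart D)

end IsClosureOp

theorem binPart_union (φ : Set α → Set α) (X Y : Set α) :
    binPart φ (X ∪ Y) = binPart φ X ∪ binPart φ Y :=
  biUnion_union X Y _

theorem ModularLattice.closure_inter_union_eq (hmod : ModularLattice φ) (hA : IsClosedSet φ A)
    (hD : IsClosedSet φ D) (hX : IsClosedSet φ X) (hAD : A ⊆ D) (hDX : D ⊆ φ (X ∪ A)) :
    φ (D ∩ X ∪ A) = D := by
  rw [hmod A D X hA hD hX hAD, inter_eq_left.2 hDX]

theorem exists_predecessor_of_ssubset [Finite α] (hC : IsClosedSet φ C) (hX : IsClosedSet φ X)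
    (h : X ⊂ C) : ∃ K, Predecessor φ K C ∧ X ⊆ K := by
  obtain ⟨K, ⟨hK, hKC, hXK⟩, hmax⟩ := (Set.toFinite
    {K : Set α | IsClosedSet φ K ∧ K ⊂ C ∧ X ⊆ K}).exists_maximal ⟨X, hX, h, Subset.rfl⟩
  refine ⟨K, ⟨hK, hC, hKC, fun E hE hKE hEC => ?_⟩, hXK⟩
  by_contra hne
  exact hKE.2 (hmax ⟨hE, hEC.ssubset_of_ne hne, hXK.trans hKE.1⟩ hKE.1)

namespace Predecessor

theorem isClosedSet (hK : Predecessor φ K C) : IsClosedSet φ K := hK.1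

theorem isClosedSet_right (hK : Predecessor φ K C) : IsClosedSet φ C := hK.2.1

theorem ssubset (hK : Predecessor φ K C) : K ⊂ C := hK.2.2.1

theorem subset (hK : Predecessor φ K C) : K ⊆ C := hK.ssubset.subset

theorem eq_or_eq (hK : Predecessor φ K C) (hX : IsClosedSet φ X) (hKX : K ⊆ X) (hXC : X ⊆ C) :
    X = K ∨ X = C :=
  or_iff_not_imp_left.2 fun hne => hK.2.2.2 X hX (hKX.ssubset_of_ne (Ne.symm hne)) hXC

theorem eq_of_subset (hK : Predecessor φ K C) (hL : Predecessor φ L C) (h : K ⊆ L) : K = L :=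
  ((hK.eq_or_eq hL.isClosedSet h hL.subset).resolve_right hL.ssubset.ne).symm

theorem lowerMeet_subset (hK : Predecessor φ K C) : lowerMeet φ C ⊆ K :=
  sInter_subset_of_mem hK

theorem closure_union_eq_of_not_subset (hφ : IsClosureOp φ) (hK : Predecessor φ K C)
    (hXC : X ⊆ C) (hXK : ¬ X ⊆ K) : φ (K ∪ X) = C := by
  have hKX : K ∪ X ⊆ φ (K ∪ X) := hφ.subset_closure _
  refine (hK.eq_or_eq (hφ.isClosedSet_closure _) (subset_union_left.trans hKX)
    (hφ.closure_subset hK.isClosedSet_right (union_subset hK.subset hXC))).resolve_left fun h => ?_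
  exact hXK (subset_union_right.trans (hKX.trans h.subset))

theorem closure_union_eq (hφ : IsClosureOp φ) (hK : Predecessor φ K C) (hL : Predecessor φ L C)
    (hne : K ≠ L) : φ (K ∪ L) = C :=
  hK.closure_union_eq_of_not_subset hφ hL.subset fun h => hne (hL.eq_of_subset hK h).symm

theorem inter (hφ : IsClosureOp φ) (hmod : ModularLattice φ) (hK : Predecessor φ K C)
    (hL : Predecessor φ L C) (hne : K ≠ L) : Predecessor φ (K ∩ L) K := by
  refine ⟨hφ.isClosedSet_inter hK.isClosedSet hL.isClosedSet, hK.isClosedSet,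
    inter_subset_left.ssubset_of_ne fun h => hne (hK.eq_of_subset hL (inter_eq_left.1 h)),
    fun E hE hlt hEK => ?_⟩
  have hspan : φ (L ∪ E) = C := hL.closure_union_eq_of_not_subset hφ (hEK.trans hK.subset)
    fun hEL => hlt.not_subset (subset_inter hEK hEL)
  calc E = φ (K ∩ L ∪ E) := by rw [union_eq_right.2 hlt.subset, hE]
    _ = K := hmod.closure_inter_union_eq hE hK.isClosedSet hL.isClosedSet hEK
      (hK.subset.trans hspan.superset)

end Predecessor

namespace IsStandard

theorem notMem_closure_union_sdiff (hφ : IsClosureOp φ) (hstd : IsStandard φ)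
    (hmod : ModularLattice φ) (hD : IsClosedSet φ D) (hz : z ∉ D) :
    z ∉ φ (D ∪ φ {z} \ {z}) := by
  intro hmem
  have hinter : φ {z} ∩ D ⊆ φ {z} \ {z} :=
    subset_sdiff_singleton inter_subset_left fun h => hz h.2
  have heq : φ {z} \ {z} = φ {z} :=
    calc φ {z} \ {z} = φ (φ {z} ∩ D ∪ φ {z} \ {z}) := by rw [union_eq_right.2 hinter, hstd z]
      _ = φ {z} := hmod.closure_inter_union_eq (hstd z) (hφ.isClosedSet_closure _) hD
        sdiff_subset (hφ.closure_singleton_subset (hφ.isClosedSet_closure _) hmem)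
  exact (heq.superset (hφ.mem_closure_singleton z)).2 rfl

theorem closure_singleton_sdiff_subset (hφ : IsClosureOp φ) (hstd : IsStandard φ)
    (hmod : ModularLattice φ) (hD : Predecessor φ D K) (hz : z ∈ K \ D) :
    φ {z} \ {z} ⊆ D := by
  have hnot := hstd.notMem_closure_union_sdiff hφ hmod hD.isClosedSet hz.2
  by_contra h
  rw [hD.closure_union_eq_of_not_subset hφ
    (sdiff_subset.trans (hφ.closure_singleton_subset hD.isClosedSet_right hz.1)) h] at hnot
  exact hnot hz.1

theorem closure_singleton_ne (hφ : IsClosureOp φ) (hstd : IsStandard φ) (hK : Predecessor φ K C)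
    (hL : Predecessor φ L C) (hne : K ≠ L) (x : α) : φ {x} ≠ C := by
  intro hx
  have subset_sdiff : ∀ M, Predecessor φ M C → M ⊆ φ {x} \ {x} := fun M hM =>
    subset_sdiff_singleton (hM.subset.trans hx.superset) fun hxM =>
      hM.ssubset.not_subset (hx ▸ hφ.closure_singleton_subset hM.isClosedSet hxM)
  have hC : φ {x} ⊆ φ {x} \ {x} :=
    calc φ {x} = φ (K ∪ L) := hx.trans (hK.closure_union_eq hφ hL hne).symm
      _ ⊆ φ {x} \ {x} :=
        hφ.closure_subset (hstd x) (union_subset (subset_sdiff K hK) (subset_sdiff L hL))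
  exact (hC (hφ.mem_closure_singleton x)).2 rfl

theorem exists_predecessor_mem [Finite α] (hφ : IsClosureOp φ) (hstd : IsStandard φ)
    (hK : Predecessor φ K C) (hL : Predecessor φ L C) (hne : K ≠ L) (hx : x ∈ C) :
    ∃ M, Predecessor φ M C ∧ x ∈ M := by
  have hlt : φ {x} ⊂ C := (hφ.closure_singleton_subset hK.isClosedSet_right hx).ssubset_of_ne
    (hstd.closure_singleton_ne hφ hK hL hne x)
  obtain ⟨M, hM, hxM⟩ :=
    exists_predecessor_of_ssubset hK.isClosedSet_right (hφ.isClosedSet_closure _) hlt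
  exact ⟨M, hM, hxM (hφ.mem_closure_singleton x)⟩

end IsStandard

section TwoPredecessors

variable {Ci Cj : Set α}

theorem closure_singleton_union_inter_ne (hφ : IsClosureOp φ) (hstd : IsStandard φ)
    (hmod : ModularLattice φ) (hCi : Predecessor φ Ci C) (hCj : Predecessor φ Cj C)
    (hne : Ci ≠ Cj) (hzi : z ∉ Ci) (hzj : z ∉ Cj) (hzC : z ∈ C) :
    φ (φ {z} ∪ Ci ∩ Cj) ≠ C := by
  intro hW
  have hD : IsClosedSet φ (Ci ∩ Cj) := hφ.isClosedSet_inter hCi.isClosedSet hCj.isClosedSet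
  have le_lower : ∀ K, Predecessor φ K C → z ∉ K → Ci ∩ Cj ⊆ K →
      K ⊆ φ (Ci ∩ Cj ∪ φ {z} \ {z}) := fun K hK hzK hDK =>
    calc K = φ (K ∩ φ {z} ∪ Ci ∩ Cj) := (hmod.closure_inter_union_eq hD hK.isClosedSet
          (hφ.isClosedSet_closure _) hDK (hK.subset.trans hW.superset)).symm
      _ ⊆ φ (Ci ∩ Cj ∪ φ {z} \ {z}) := hφ.2.2 _ _ (union_subset
          ((subset_sdiff_singleton inter_subset_right fun h => hzK h.1).trans subset_union_right)
          subset_union_left)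
  have hC : C ⊆ φ (Ci ∩ Cj ∪ φ {z} \ {z}) :=
    calc C = φ (Ci ∪ Cj) := (hCi.closure_union_eq hφ hCj hne).symm
      _ ⊆ φ (Ci ∩ Cj ∪ φ {z} \ {z}) := hφ.closure_subset (hφ.isClosedSet_closure _)
        (union_subset (le_lower Ci hCi hzi inter_subset_left)
          (le_lower Cj hCj hzj inter_subset_right))
  exact hstd.notMem_closure_union_sdiff hφ hmod hD (fun h => hzi h.1) (hC hzC)

theorem closure_singleton_union_inter_inter_eq (hφ : IsClosureOp φ) (hstd : IsStandard φ)
    (hmod : ModularLattice φ) (hCi : Predecessor φ Ci C) (hCj : Predecessor φ Cj C)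
    (hne : Ci ≠ Cj) (hzi : z ∉ Ci) (hzj : z ∉ Cj) (hzC : z ∈ C) :
    φ (φ {z} ∪ Ci ∩ Cj) ∩ Ci = Ci ∩ Cj := by
  set W := φ (φ {z} ∪ Ci ∩ Cj)
  have hW : IsClosedSet φ W := hφ.isClosedSet_closure _
  have hDW : Ci ∩ Cj ⊆ W := subset_union_right.trans (hφ.subset_closure _)
  have hzW : z ∈ W := hφ.subset_closure _ (Or.inl (hφ.mem_closure_singleton z))
  have hWC : W ⊆ C := hφ.closure_subset hCi.isClosedSet_right (union_subset
    (hφ.closure_singleton_subset hCi.isClosedSet_right hzC)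
    (inter_subset_left.trans hCi.subset))
  refine ((hCi.inter hφ hmod hCj hne).eq_or_eq (hφ.isClosedSet_inter hW hCi.isClosedSet)
    (subset_inter hDW inter_subset_left) inter_subset_right).resolve_right fun h => ?_
  rcases hCi.eq_or_eq hW (inter_eq_right.1 h) hWC with hWCi | hWeq
  · exact hzi (hWCi ▸ hzW)
  · exact closure_singleton_union_inter_ne hφ hstd hmod hCi hCj hne hzi hzj hzC hWeq

theorem closure_inter_union_inter_eq_of_not_subset (hφ : IsClosureOp φ) (hmod : ModularLattice φ)
    (hCi : Predecessor φ Ci C) (hCj : Predecessor φ Cj C) (hne : Ci ≠ Cj)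
    (hK : Predecessor φ K C) (hDK : ¬ Ci ∩ Cj ⊆ K) : φ (Ci ∩ K ∪ Cj ∩ K) = K := by
  set M := φ (Ci ∩ K ∪ Cj ∩ K)
  have hD : IsClosedSet φ (Ci ∩ Cj) := hφ.isClosedSet_inter hCi.isClosedSet hCj.isClosedSet
  have hM : IsClosedSet φ M := hφ.isClosedSet_closure _
  have hgen : Ci ∩ K ∪ Cj ∩ K ⊆ M := hφ.subset_closure _
  have hMK : M ⊆ K :=
    hφ.closure_subset hK.isClosedSet (union_subset inter_subset_right inter_subset_right)
  have hKD : φ (K ∪ Ci ∩ Cj) = C :=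
    hK.closure_union_eq_of_not_subset hφ (inter_subset_left.trans hCi.subset) hDK
  have le_join : ∀ L, Predecessor φ L C → Ci ∩ Cj ⊆ L → L ∩ K ⊆ M → L ⊆ φ (Ci ∩ Cj ∪ M) :=
    fun L hL hDL hLM =>
    calc L = φ (L ∩ K ∪ Ci ∩ Cj) := (hmod.closure_inter_union_eq hD hL.isClosedSet
          hK.isClosedSet hDL (hL.subset.trans hKD.superset)).symm
      _ ⊆ φ (Ci ∩ Cj ∪ M) := hφ.2.2 _ _
        (union_subset (hLM.trans subset_union_right) subset_union_left)
  have hC : C ⊆ φ (Ci ∩ Cj ∪ M) :=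
    calc C = φ (Ci ∪ Cj) := (hCi.closure_union_eq hφ hCj hne).symm
      _ ⊆ φ (Ci ∩ Cj ∪ M) := hφ.closure_subset (hφ.isClosedSet_closure _) (union_subset
        (le_join Ci hCi inter_subset_left (subset_union_left.trans hgen))
        (le_join Cj hCj inter_subset_right (subset_union_right.trans hgen)))
  have hKDM : K ∩ (Ci ∩ Cj) ⊆ M := fun y hy => hgen (Or.inl ⟨hy.2.1, hy.1⟩)
  calc M = φ (K ∩ (Ci ∩ Cj) ∪ M) := by rw [union_eq_right.2 hKDM, hM]
    _ = K := hmod.closure_inter_union_eq hM hK.isClosedSet hD hMK (hK.subset.trans hC)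

theorem Predecessor.inter_subset_of_quasiClosed_union (hφ : IsClosureOp φ) (hstd : IsStandard φ)
    (hmod : ModularLattice φ) (hCi : Predecessor φ Ci C) (hCj : Predecessor φ Cj C)
    (hnc : ¬ IsClosedSet φ (Ci ∪ Cj)) (hQ : QuasiClosed φ (Ci ∪ Cj)) (hK : Predecessor φ K C) :
    Ci ∩ Cj ⊆ K := by
  by_contra hDK
  have hne : Ci ≠ Cj := by
    rintro rfl
    exact hnc ((union_self Ci).symm ▸ hCi.isClosedSet)
  have hspan : φ (Ci ∪ Cj) = C := hCi.closure_union_eq hφ hCj hne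
  have hD : IsClosedSet φ (Ci ∩ Cj) := hφ.isClosedSet_inter hCi.isClosedSet hCj.isClosedSet
  obtain ⟨z, hzC, hzP⟩ : ∃ z ∈ C, z ∉ Ci ∪ Cj := not_subset.1 fun h =>
    hnc ((hspan.subset.trans h).antisymm (hφ.subset_closure _))
  obtain ⟨hzi, hzj⟩ : z ∉ Ci ∧ z ∉ Cj := not_or.1 hzP
  have hKeq : φ (Ci ∩ K ∪ Cj ∩ K) = K :=
    closure_inter_union_inter_eq_of_not_subset hφ hmod hCi hCj hne hK hDK
  have hKP : K ⊆ Ci ∪ Cj :=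
    hKeq ▸ hQ _ (union_subset_union inter_subset_left inter_subset_left)
      (by rw [hKeq, hspan]; exact hK.ssubset)
  set W := φ (φ {z} ∪ Ci ∩ Cj) with hWdef
  have hW : IsClosedSet φ W := hφ.isClosedSet_closure _
  have hWi : W ∩ Ci = Ci ∩ Cj :=
    closure_singleton_union_inter_inter_eq hφ hstd hmod hCi hCj hne hzi hzj hzC
  have hWj : W ∩ Cj = Ci ∩ Cj := by
    rw [hWdef, inter_comm Ci]
    exact closure_singleton_union_inter_inter_eq hφ hstd hmod hCj hCi hne.symm hzj hzi hzC
  have hWK : W ∩ K ⊆ Ci ∩ Cj :=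
    calc W ∩ K ⊆ W ∩ (Ci ∪ Cj) := inter_subset_inter_right W hKP
      _ = Ci ∩ Cj := by rw [inter_union_distrib_left, hWi, hWj, union_self]
  have hWC : W ⊆ C := hφ.closure_subset hCi.isClosedSet_right (union_subset
    (hφ.closure_singleton_subset hCi.isClosedSet_right hzC) (inter_subset_left.trans hCi.subset))
  have hKD : φ (K ∪ Ci ∩ Cj) = C :=
    hK.closure_union_eq_of_not_subset hφ (inter_subset_left.trans hCi.subset) hDK
  have hWD : W = Ci ∩ Cj :=
    calc W = φ (W ∩ K ∪ Ci ∩ Cj) := (hmod.closure_inter_union_eq hD hW hK.isClosedSet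
          (subset_union_right.trans (hφ.subset_closure _)) (hWC.trans hKD.superset)).symm
      _ = Ci ∩ Cj := by rw [union_eq_right.2 hWK, hD]
  exact hzi (hWD.subset (hφ.subset_closure _ (Or.inl (hφ.mem_closure_singleton z)))).1

theorem hasLengthTwo_of_inter_subset (hφ : IsClosureOp φ) (hmod : ModularLattice φ)
    (hCi : Predecessor φ Ci C) (hCj : Predecessor φ Cj C) (hne : Ci ≠ Cj)
    (h : ∀ K, Predecessor φ K C → Ci ∩ Cj ⊆ K) : HasLengthTwo φ C := by
  intro K hK
  have hstar : lowerMeet φ C = Ci ∩ Cj :=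
    (subset_inter hCi.lowerMeet_subset hCj.lowerMeet_subset).antisymm (subset_sInter h)
  have hDi : Predecessor φ (Ci ∩ Cj) Ci := hCi.inter hφ hmod hCj hne
  rw [hstar]
  by_cases hKi : K = Ci
  · rwa [hKi]
  · have hDeq : Ci ∩ Cj = Ci ∩ K := hDi.eq_of_subset (hCi.inter hφ hmod hK (Ne.symm hKi))
      (subset_inter inter_subset_left (h K hK))
    rw [hDeq, inter_comm]
    exact hK.inter hφ hmod hCi hKi

end TwoPredecessors

theorem exists_isDGen_of_mem_closure [Finite α] (hx : x ∈ φ Z) (hxb : x ∉ binPart φ Z) :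
    ∃ A, binPart φ A ⊆ binPart φ Z ∧ IsDGen φ x A := by
  obtain ⟨A, ⟨hxA, hAZ⟩, hmin⟩ := (Set.toFinite
    {A : Set α | x ∈ φ A ∧ binPart φ A ⊆ binPart φ Z}).exists_minimalFor (binPart φ) _
      ⟨Z, hx, Subset.rfl⟩
  exact ⟨A, hAZ, hxA, fun h => hxb (hAZ h),
    fun B hB hxB => hB.2 (hmin ⟨hxB, hB.1.trans hAZ⟩ hB.1)⟩

theorem Predecessor.exists_isDGen_closure_subset [Finite α] (hφ : IsClosureOp φ)
    (hstd : IsStandard φ) (hmod : ModularLattice φ) (hD : Predecessor φ D K) (hx : x ∈ K \ D)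
    (hz : z ∈ K \ D) (hzx : z ≠ x) : ∃ B, IsDGen φ x B ∧ φ B ⊆ K := by
  have hspan : φ (D ∪ {z}) = K := hD.closure_union_eq_of_not_subset hφ
    (singleton_subset_iff.2 hz.1) fun h => hz.2 (h rfl)
  have hbin : binPart φ (D ∪ {z}) = D ∪ φ {z} := by
    rw [binPart_union, hφ.binPart_eq_self hD.isClosedSet, binPart, biUnion_singleton]
  have hxb : x ∉ binPart φ (D ∪ {z}) := by
    rw [hbin]
    rintro (hxD | hxz)
    · exact hx.2 hxD
    · exact hx.2 (hstd.closure_singleton_sdiff_subset hφ hmod hD hz ⟨hxz, hzx.symm⟩)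
  obtain ⟨B, hB, hBx⟩ := exists_isDGen_of_mem_closure (hspan.superset hx.1) hxb
  refine ⟨B, hBx, hφ.closure_subset hD.isClosedSet_right ?_⟩
  calc B ⊆ binPart φ B := hφ.subset_binPart B
    _ ⊆ D ∪ φ {z} := hbin ▸ hB
    _ ⊆ K := union_subset hD.subset (hφ.closure_singleton_subset hD.isClosedSet_right hz.1)

theorem IsEGen.mem_impClosure (hA : IsEGen φ x A) (hAZ : A ⊆ Z) : x ∈ ImpClosure (EBase φ) Z :=
  fun _ ⟨hZY, hY⟩ => hY (A, {x}) (Or.inr ⟨x, A, rfl, hA⟩) (hAZ.trans hZY) rfl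

namespace HasLengthTwo

theorem inter_eq (hφ : IsClosureOp φ) (h : HasLengthTwo φ C) (hK : Predecessor φ K C)
    (hL : Predecessor φ L C) (hne : K ≠ L) : K ∩ L = lowerMeet φ C :=
  ((h K hK).eq_or_eq (hφ.isClosedSet_inter hK.isClosedSet hL.isClosedSet)
    (subset_inter hK.lowerMeet_subset hL.lowerMeet_subset) inter_subset_left).resolve_right
      fun heq => hne (hK.eq_of_subset hL (inter_eq_left.1 heq))

theorem subset_sdiff (hφ : IsClosureOp φ) (h : HasLengthTwo φ C) (hK : Predecessor φ K C)
    (hL : Predecessor φ L C) (hne : K ≠ L) : L ⊆ C \ (K \ lowerMeet φ C) :=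
  fun _ hy => ⟨hL.subset hy, fun hyK => hyK.2 ((h.inter_eq hφ hK hL hne).subset ⟨hyK.1, hy⟩)⟩

theorem closure_subset_sdiff [Finite α] (hφ : IsClosureOp φ) (h : HasLengthTwo φ C)
    (hK : Predecessor φ K C) (hA : A ⊆ C \ (K \ lowerMeet φ C)) (hne : φ A ≠ C) :
    φ A ⊆ C \ (K \ lowerMeet φ C) := by
  have hAC : φ A ⊆ C := hφ.closure_subset hK.isClosedSet_right (hA.trans sdiff_subset)
  obtain ⟨L, hL, hAL⟩ := exists_predecessor_of_ssubset hK.isClosedSet_right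
    (hφ.isClosedSet_closure A) (hAC.ssubset_of_ne hne)
  by_cases hKL : K = L
  · subst hKL
    have hAD : A ⊆ lowerMeet φ C := fun y hy => by
      by_contra hyD
      exact (hA hy).2 ⟨hAL (hφ.subset_closure A hy), hyD⟩
    exact fun y hy => ⟨hAC hy, fun hyK => hyK.2 (hφ.closure_subset (h K hK).isClosedSet hAD hy)⟩
  · exact hAL.trans (h.subset_sdiff hφ hK hL hKL)

theorem isEGen_of_isDGen [Finite α] (hφ : IsClosureOp φ) (h : HasLengthTwo φ C)
    (hK : Predecessor φ K C) (hKx : K \ lowerMeet φ C = {x}) (hA : IsDGen φ x A) (hAC : φ A ⊆ C) :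
    IsEGen φ x A := by
  have span_of_isDGen : ∀ B, IsDGen φ x B → φ B ⊆ C → φ B = C := fun B hB hBC => by
    by_contra hne
    have hxB : x ∉ B := fun hxB => hB.2.1 (hφ.subset_binPart B hxB)
    have hBdiff : B ⊆ C \ (K \ lowerMeet φ C) :=
      hKx ▸ subset_sdiff_singleton ((hφ.subset_closure B).trans hBC) hxB
    exact (h.closure_subset_sdiff hφ hK hBdiff hne hB.1).2 (hKx ▸ rfl)
  exact ⟨hA, fun B hB hBA =>
    (span_of_isDGen B hB (hBA.trans hAC)).trans (span_of_isDGen A hA hAC).symm⟩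

theorem closure_ne_of_isEGen [Finite α] (hφ : IsClosureOp φ) (hstd : IsStandard φ)
    (hmod : ModularLattice φ) (h : HasLengthTwo φ C) (hK : Predecessor φ K C)
    (hcard : 1 < (K \ lowerMeet φ C).ncard) (hx : x ∈ K \ lowerMeet φ C) (hA : IsEGen φ x A) :
    φ A ≠ C := by
  intro hAC
  obtain ⟨z, hz, hzx⟩ := exists_ne_of_one_lt_ncard hcard x
  obtain ⟨B, hB, hBK⟩ := (h K hK).exists_isDGen_closure_subset hφ hstd hmod hx hz hzx
  have hBC : φ B = C := (hA.2 B hB (hBK.trans (hK.subset.trans hAC.superset))).trans hAC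
  exact hK.ssubset.not_subset (hBC ▸ hBK)

theorem impClosedSet_sdiff [Finite α] (hφ : IsClosureOp φ) (hstd : IsStandard φ)
    (hmod : ModularLattice φ) (h : HasLengthTwo φ C) (hK : Predecessor φ K C)
    (hL : Predecessor φ L C) (hne : K ≠ L) (hcard : 1 < (K \ lowerMeet φ C).ncard) :
    ImpClosedSet (EBase φ) (C \ (K \ lowerMeet φ C)) := by
  rintro _ (⟨a, x, rfl, hx, -⟩ | ⟨x, A, rfl, hA⟩) hsub <;> refine singleton_subset_iff.2 ?_
  · exact h.closure_subset_sdiff hφ hK hsub (hstd.closure_singleton_ne hφ hK hL hne a) hx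
  · have hxC : x ∈ C :=
      hφ.closure_subset hK.isClosedSet_right (hsub.trans sdiff_subset) hA.1.1
    refine ⟨hxC, fun hxK => ?_⟩
    have hAC : φ A ≠ C := h.closure_ne_of_isEGen hφ hstd hmod hK hcard hxK hA
    exact (h.closure_subset_sdiff hφ hK hsub hAC hA.1.1).2 hxK

theorem impClosure_ssubset [Finite α] (hφ : IsClosureOp φ) (hstd : IsStandard φ)
    (hmod : ModularLattice φ) (h : HasLengthTwo φ C) (hK : Predecessor φ K C)
    (hL : Predecessor φ L C) (hne : K ≠ L) (hcard : 1 < (K \ lowerMeet φ C).ncard)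
    (hP : P ⊆ C \ (K \ lowerMeet φ C)) : ImpClosure (EBase φ) P ⊂ C := by
  have hnonempty : (K \ lowerMeet φ C).Nonempty :=
    (ncard_pos (Set.toFinite _)).1 (Nat.zero_lt_of_lt hcard)
  calc ImpClosure (EBase φ) P ⊆ C \ (K \ lowerMeet φ C) :=
        sInter_subset_of_mem ⟨hP, h.impClosedSet_sdiff hφ hstd hmod hK hL hne hcard⟩
    _ ⊂ C := sdiff_ssubset_left_iff.2 (by
        rwa [inter_eq_right.2 (sdiff_subset.trans hK.subset)])

theorem subset_impClosure [Finite α] (hφ : IsClosureOp φ) (hstd : IsStandard φ)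
    (h : HasLengthTwo φ C) (hK : Predecessor φ K C) (hL : Predecessor φ L C) (hne : K ≠ L)
    (hcard : ∀ M, Predecessor φ M C → M ≠ K → M ≠ L → (M \ lowerMeet φ C).ncard ≤ 1) :
    C ⊆ ImpClosure (EBase φ) (K ∪ L) := by
  intro x hxC
  by_cases hxP : x ∈ K ∪ L
  · exact fun Y hY => hY.1 hxP
  obtain ⟨hxK, hxL⟩ : x ∉ K ∧ x ∉ L := not_or.1 hxP
  obtain ⟨M, hM, hxM⟩ := hstd.exists_predecessor_mem hφ hK hL hne hxC
  have hMx : M \ lowerMeet φ C = {x} := by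
    have hle := hcard M hM (fun hMK => hxK (hMK ▸ hxM)) (fun hML => hxL (hML ▸ hxM))
    have hx : x ∈ M \ lowerMeet φ C := ⟨hxM, fun hxD => hxK (hK.lowerMeet_subset hxD)⟩
    exact Subset.antisymm
      (fun y hy => (ncard_le_one (Set.toFinite _)).1 hle y hy x hx) (singleton_subset_iff.2 hx)
  have hbin : binPart φ (K ∪ L) = K ∪ L := by
    rw [binPart_union, hφ.binPart_eq_self hK.isClosedSet, hφ.binPart_eq_self hL.isClosedSet]
  obtain ⟨A, hAb, hA⟩ := exists_isDGen_of_mem_closure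
    ((hK.closure_union_eq hφ hL hne).superset hxC) (hbin.symm ▸ hxP)
  have hAP : A ⊆ K ∪ L := (hφ.subset_binPart A).trans (hbin ▸ hAb)
  have hAC : φ A ⊆ C := hφ.closure_subset hK.isClosedSet_right
    (hAP.trans (union_subset hK.subset hL.subset))
  exact (h.isEGen_of_isDGen hφ hM hMx hA hAC).mem_impClosure hAP

end HasLengthTwo

/-- in a modular closure space, for a non-join-irreducible essential
set `C`, a pseudo-closed set of the form `Ci ∪ Cj` (union of two predecessors)
spanning `C` is faulty iff there is a third predecessor `Ck` with `|Ck \ C_*| > 1`. -/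
theorem statement16 {α : Type*} [Fintype α] (φ : Set α → Set α)
    (hφ : IsClosureOp φ) (hstd : IsStandard φ) (hmod : ModularLattice φ)
    (C Ci Cj : Set α) (hess : Essential φ C) (hnji : ¬ JoinIrredUP φ C)
    (hCi : Predecessor φ Ci C) (hCj : Predecessor φ Cj C)
    (hP : PseudoClosed φ (Ci ∪ Cj)) (hspan : φ (Ci ∪ Cj) = C) :
    ImpClosure (EBase φ) (Ci ∪ Cj) ⊂ C ↔
      ∃ Ck : Set α, Predecessor φ Ck C ∧ Ck ≠ Ci ∧ Ck ≠ Cj ∧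
        1 < (Ck \ ⋂₀ {D : Set α | Predecessor φ D C}).ncard := by
  have hne : Ci ≠ Cj := by
    rintro rfl
    exact hP.1 ((union_self Ci).symm ▸ hCi.isClosedSet)
  have htwo : HasLengthTwo φ C := hasLengthTwo_of_inter_subset hφ hmod hCi hCj hne
    fun K hK => hCi.inter_subset_of_quasiClosed_union hφ hstd hmod hCj hP.1 hP.2.1 hK
  constructor
  · intro hlt
    by_contra! hcard
    exact hlt.not_subset (htwo.subset_impClosure hφ hstd hCi hCj hne hcard)
  · rintro ⟨K, hK, hKi, hKj, hcard⟩
    exact htwo.impClosure_ssubset hφ hstd hmod hK hCi hKi hcard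
      (union_subset (htwo.subset_sdiff hφ hK hCi hKi) (htwo.subset_sdiff hφ hK hCj hKj))

end EBaseFormal
end

section
/- Let (U, φ) be a finite standard closure space with geometric closure lattice such that U itself is essential and all essential closed sets other than U are pairwise incomparable under inclusion. Let A be the set of elements of U that are almost prime in the closure lattice of (U, φ), assumed nonempty, and let b be the common size of the bases of the associated matroid (the minimal spanning sets of U). Then there exists a base B* with |B* ∩ A| = min{b, |A|}. -/
namespace EBaseFormal

open Set

variable {α : Type*}

/-!
An almost prime element `x` is prime below every hyperplane, and an element that is prime below a
closed set lies in the closure of a subset only by belonging to it. Since every non-spanning set is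
contained in a hyperplane, `x ∈ φ J` with `x ∉ J` forces `J` to span.
Consequently the set `A` of almost prime elements is either independent, and extends to a base
`B ⊇ A`, or some `A \ {x}` spans, and contains a base `B ⊆ A`. In both cases `|B ∩ A|` is as large
as it can be.
-/

section ClosureSpace

variable {φ : Set α → Set α}

theorem IsClosureOp.subset_closure_s19 (hφ : IsClosureOp φ) (X : Set α) : X ⊆ φ X :=
  hφ.1 X

theorem IsClosureOp.isClosedSet_closure_s19 (hφ : IsClosureOp φ) (X : Set α) :
    IsClosedSet φ (φ X) :=
  hφ.2.1 X

theorem IsClosureOp.closure_mono (hφ : IsClosureOp φ) {X Y : Set α} (h : X ⊆ Y) : φ X ⊆ φ Y :=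
  hφ.2.2 X Y h

theorem IsClosureOp.closure_subset_s19 (hφ : IsClosureOp φ) {X C : Set α} (hC : IsClosedSet φ C)
    (h : X ⊆ C) : φ X ⊆ C :=
  (hφ.closure_mono h).trans_eq hC

theorem IsClosureOp.isClosedSet_univ (hφ : IsClosureOp φ) : IsClosedSet φ univ :=
  univ_subset_iff.1 (hφ.subset_closure_s19 univ)

theorem Atomistic.binPart_eq (hat : Atomistic φ) (X : Set α) : binPart φ X = X := by
  simp only [binPart, hat _, biUnion_of_singleton]

/-- The closure operator `φ` is finitary (algebraic): every element of `φ X` already lies in the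
closure of a finite part of `X`. -/
def Finitary (φ : Set α → Set α) : Prop :=
  ∀ (X : Set α), ∀ x ∈ φ X, ∃ Y ⊆ X, Y.Finite ∧ x ∈ φ Y

theorem finitary_of_finite [Finite α] (φ : Set α → Set α) : Finitary φ :=
  fun X _ hx => ⟨X, Subset.rfl, X.toFinite, hx⟩

theorem Finitary.isOfFiniteCharacter_notMem_closure (hfin : Finitary φ) (hφ : IsClosureOp φ)
    (e : α) : Order.IsOfFiniteCharacter {X | e ∉ φ X} := by
  refine fun X => ⟨fun h Y hYX _ he => h (hφ.closure_mono hYX he), fun h he => ?_⟩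
  obtain ⟨Y, hYX, hY, heY⟩ := hfin X e he
  exact h Y hYX hY heY

/-- The Mac Lane–Steinitz exchange property of the closure operator `φ`. -/
def Exchange (φ : Set α → Set α) : Prop :=
  ∀ (X : Set α) (y z : α), y ∈ φ (insert z X) → y ∉ φ X → z ∈ φ (insert y X)

theorem Atomistic.predecessor_empty_singleton (hat : Atomistic φ) (h : IsClosedSet φ ∅) (z : α) :
    Predecessor φ ∅ {z} :=
  ⟨h, hat z, empty_ssubset_singleton, fun _ _ hC hCz =>
    (subset_singleton_iff_eq.1 hCz).resolve_left hC.ne'⟩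

theorem Geometric.exchange (hgeo : Geometric φ) (hφ : IsClosureOp φ) : Exchange φ := by
  obtain ⟨hat, hsm⟩ := hgeo
  intro X y z hy hyX
  have hz : z ∉ φ X := fun hz =>
    hyX (hφ.closure_subset_s19 (hφ.isClosedSet_closure_s19 X)
      (insert_subset hz (hφ.subset_closure_s19 X)) hy)
  have hempty : IsClosedSet φ ∅ := by
    have h : φ ∅ ⊆ {z} := (hφ.closure_mono (empty_subset {z})).trans_eq (hat z)
    exact (subset_singleton_iff_eq.1 h).resolve_right fun h =>
      hz (hφ.closure_mono (empty_subset X) (h ▸ mem_singleton z))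
  have hinter : {z} ∩ φ X = ∅ := singleton_inter_eq_empty.2 hz
  obtain ⟨-, -, -, hcover⟩ := hsm {z} (φ X) (hat z) (hφ.isClosedSet_closure_s19 X)
    (hinter ▸ hat.predecessor_empty_singleton hempty z)
  have hX : X ⊆ φ ({z} ∪ φ X) :=
    (hφ.subset_closure_s19 X).trans (subset_union_right.trans (hφ.subset_closure_s19 _))
  have hz' : z ∈ φ ({z} ∪ φ X) := hφ.subset_closure_s19 _ (Or.inl rfl)
  have hy' : y ∈ φ ({z} ∪ φ X) :=
    hφ.closure_subset_s19 (hφ.isClosedSet_closure_s19 _) (insert_subset hz' hX) hy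
  have hlt : φ X ⊂ φ (insert y X) := ⟨hφ.closure_mono (subset_insert y X), fun h =>
    hyX (h (hφ.subset_closure_s19 _ (mem_insert y X)))⟩
  have hjoin : φ (insert y X) = φ ({z} ∪ φ X) :=
    hcover _ (hφ.isClosedSet_closure_s19 _) hlt
      (hφ.closure_subset_s19 (hφ.isClosedSet_closure_s19 _) (insert_subset hy' hX))
  exact hjoin ▸ hz'

theorem Exchange.exists_predecessor_univ (hex : Exchange φ) (hφ : IsClosureOp φ)
    (hfin : Finitary φ) {X : Set α} (hX : φ X ≠ univ) :
    ∃ H, Predecessor φ H univ ∧ X ⊆ H := by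
  obtain ⟨e, he⟩ := (ne_univ_iff_exists_notMem _).1 hX
  obtain ⟨H, hXH, hH⟩ := (hfin.isOfFiniteCharacter_notMem_closure hφ e).exists_maximal he
  have heH : e ∉ φ H := hH.prop
  have hclosed : IsClosedSet φ H :=
    (hH.eq_of_subset (by rwa [mem_ofPred_eq, hφ.isClosedSet_closure_s19 H])
      (hφ.subset_closure_s19 H)).symm
  have he_mem {y : α} (hy : y ∉ H) : e ∈ φ (insert y H) := by
    by_contra h
    exact hy (hH.le_of_ge h (subset_insert y H) (mem_insert y H))
  refine ⟨H, ⟨hclosed, hφ.isClosedSet_univ, ssubset_univ_iff.2 ?_, ?_⟩, hXH⟩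
  · rintro rfl
    exact heH (hφ.subset_closure_s19 _ (mem_univ e))
  · intro C hC hHC _
    obtain ⟨y, hyC, hyH⟩ := exists_of_ssubset hHC
    have heC : e ∈ C := hφ.closure_subset_s19 hC (insert_subset hyC hHC.subset) (he_mem hyH)
    refine eq_univ_of_forall fun w => ?_
    by_cases hw : w ∈ H
    · exact hHC.subset hw
    · exact hφ.closure_subset_s19 hC (insert_subset heC hHC.subset)
        (hex H e w (he_mem hw) heH)

/-- Independence of `I` in the matroid associated with `φ`: no element of `I` lies in the closure
of the others. -/
def Independent (φ : Set α → Set α) (I : Set α) : Prop :=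
  ∀ x ∈ I, x ∉ φ (I \ {x})

/-- A base of the closure space: an inclusion-minimal spanning set of the universe. -/
def IsBase (φ : Set α → Set α) (B : Set α) : Prop :=
  φ B = univ ∧ ∀ B' ⊆ B, φ B' = univ → B' = B

theorem Independent.subset {I J : Set α} (hJ : Independent φ J) (hφ : IsClosureOp φ)
    (hIJ : I ⊆ J) : Independent φ I :=
  fun x hx h => hJ x (hIJ hx) (hφ.closure_mono (sdiff_subset_sdiff_left hIJ) h)

theorem Independent.insert_of_notMem_closure {I : Set α} (hI : Independent φ I) (hφ : IsClosureOp φ)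
    (hex : Exchange φ) {y : α} (hy : y ∉ φ I) : Independent φ (insert y I) := by
  intro x hx hxI
  obtain rfl | hxy := eq_or_ne x y
  · exact hy (hφ.closure_mono (by simp) hxI)
  · have hxmem : x ∈ I := hx.resolve_left hxy
    rw [insert_sdiff_of_notMem _ (by simpa using hxy.symm)] at hxI
    have hyI : y ∈ φ (insert x (I \ {x})) := hex _ x y hxI (hI x hxmem)
    rw [insert_sdiff_singleton, insert_eq_of_mem hxmem] at hyI
    exact hy hyI

theorem Independent.isBase {B : Set α} (hB : Independent φ B) (hφ : IsClosureOp φ)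
    (hspan : φ B = univ) : IsBase φ B := by
  refine ⟨hspan, fun B' hB'B hB' => hB'B.antisymm fun x hx => ?_⟩
  by_contra hxB'
  exact hB x hx (hφ.closure_mono (subset_sdiff_singleton hB'B hxB') (hB' ▸ mem_univ x))

theorem Finitary.isOfFiniteCharacter_independent (hfin : Finitary φ) (hφ : IsClosureOp φ)
    (S : Set α) : Order.IsOfFiniteCharacter {I | I ⊆ S ∧ Independent φ I} := by
  refine fun I => ⟨fun h J hJI _ => ⟨hJI.trans h.1, h.2.subset hφ hJI⟩, fun h => ⟨?_, ?_⟩⟩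
  · exact fun x hx => (h {x} (singleton_subset_iff.2 hx) (finite_singleton x)).1 rfl
  · intro x hx hxI
    obtain ⟨Y, hYI, hY, hxY⟩ := hfin _ x hxI
    have hxI' : insert x Y ⊆ I := insert_subset hx (hYI.trans sdiff_subset)
    refine (h _ hxI' (hY.insert x)).2 x (mem_insert x Y) (hφ.closure_mono ?_ hxY)
    exact subset_sdiff_singleton (subset_insert x Y) fun hxY' => (hYI hxY').2 rfl

theorem Independent.exists_isBase_between {I S : Set α} (hI : Independent φ I)
    (hφ : IsClosureOp φ) (hfin : Finitary φ) (hex : Exchange φ) (hIS : I ⊆ S)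
    (hS : φ S = univ) : ∃ B, IsBase φ B ∧ I ⊆ B ∧ B ⊆ S := by
  obtain ⟨B, hIB, hB⟩ :=
    (hfin.isOfFiniteCharacter_independent hφ S).exists_maximal ⟨hIS, hI⟩
  obtain ⟨hBS, hBind⟩ := hB.prop
  have hSB : S ⊆ φ B := by
    intro y hy
    by_contra hyB
    have hyBind : Independent φ (insert y B) := hBind.insert_of_notMem_closure hφ hex hyB
    have hins := hB.le_of_ge ⟨insert_subset hy hBS, hyBind⟩ (subset_insert y B)
    exact hyB (hφ.subset_closure_s19 B (hins (mem_insert y B)))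
  have hspan : φ B = univ :=
    univ_subset_iff.1 (hS ▸ hφ.closure_subset_s19 (hφ.isClosedSet_closure_s19 B) hSB)
  exact ⟨B, hBind.isBase hφ hspan, hIB, hBS⟩

theorem PrimeIn.mem_binPart {C J : Set α} {x : α} (hx : PrimeIn φ C x) (hφ : IsClosureOp φ)
    (hC : IsClosedSet φ C) (hx0 : x ∉ φ ∅) (hJ : J.Finite) (hJC : J ⊆ C) (hxJ : x ∈ φ J) :
    x ∈ binPart φ J := by
  induction J, hJ using Set.Finite.induction_on with
  | empty => exact absurd hxJ hx0
  | @insert j J _ _ ih =>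
    obtain ⟨hjC, hJC⟩ := insert_subset_iff.1 hJC
    have hjoin : insert j J ⊆ φ {j} ∪ φ J :=
      insert_subset (Or.inl (hφ.subset_closure_s19 _ rfl))
        ((hφ.subset_closure_s19 J).trans subset_union_right)
    have hprime := hx (φ {j}) (φ J) (hφ.isClosedSet_closure_s19 _) (hφ.isClosedSet_closure_s19 _)
      (hφ.closure_subset_s19 hC (singleton_subset_iff.2 hjC)) (hφ.closure_subset_s19 hC hJC)
      (hφ.closure_subset_s19 (hφ.isClosedSet_closure_s19 _)
        (singleton_subset_iff.2 (hφ.closure_mono hjoin hxJ)))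
    have hself : x ∈ φ {x} := hφ.subset_closure_s19 _ rfl
    rw [binPart, biUnion_insert]
    exact hprime.imp (· hself) fun h => ih hJC (h hself)

theorem AlmostPrimeIn.notMem_closure_empty {C : Set α} {x : α} (hx : AlmostPrimeIn φ C x)
    (hφ : IsClosureOp φ) : x ∉ φ ∅ := fun hx0 =>
  hx.2.1 fun _ _ hC₁ _ _ _ _ => Or.inl <| hφ.closure_subset_s19 hC₁ <|
    singleton_subset_iff.2 (hφ.closure_subset_s19 hC₁ (empty_subset _) hx0)

theorem AlmostPrimeIn.closure_eq_univ {J : Set α} {x : α} (hx : AlmostPrimeIn φ univ x)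
    (hφ : IsClosureOp φ) (hfin : Finitary φ) (hex : Exchange φ) (hxJ : x ∈ φ J)
    (hbin : x ∉ binPart φ J) : φ J = univ := by
  by_contra hJ
  obtain ⟨H, hH, hJH⟩ := hex.exists_predecessor_univ hφ hfin hJ
  have hxH : x ∈ H := hφ.closure_subset_s19 hH.1 hJH hxJ
  obtain ⟨Y, hYJ, hY, hxY⟩ := hfin J x hxJ
  exact hbin <| biUnion_mono hYJ (fun _ _ => Subset.rfl) <|
    (hx.2.2 H hH hxH).mem_binPart hφ hH.1 (hx.notMem_closure_empty hφ) hY (hYJ.trans hJH) hxY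

theorem Geometric.exists_isBase_subset_or_superset (hgeo : Geometric φ) (hφ : IsClosureOp φ)
    (hfin : Finitary φ) :
    ∃ B, IsBase φ B ∧ (B ⊆ {x | AlmostPrimeIn φ univ x} ∨ {x | AlmostPrimeIn φ univ x} ⊆ B) := by
  set A := {x | AlmostPrimeIn φ univ x}
  have hex : Exchange φ := hgeo.exchange hφ
  by_cases hA : Independent φ A
  · obtain ⟨B, hB, hAB, -⟩ :=
      hA.exists_isBase_between hφ hfin hex (subset_univ A) hφ.isClosedSet_univ
    exact ⟨B, hB, Or.inr hAB⟩
  · obtain ⟨x, hxA, hx⟩ : ∃ x ∈ A, x ∈ φ (A \ {x}) := by simpa [Independent] using hA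
    have hspan : φ (A \ {x}) = univ :=
      AlmostPrimeIn.closure_eq_univ hxA hφ hfin hex hx (by simp [hgeo.1.binPart_eq])
    have hempty : Independent φ ∅ := fun _ h => h.elim
    obtain ⟨B, hB, -, hBA⟩ := hempty.exists_isBase_between hφ hfin hex (empty_subset _) hspan
    exact ⟨B, hB, Or.inl (hBA.trans sdiff_subset)⟩

end ClosureSpace

theorem statement19_general {α : Type*} (φ : Set α → Set α) (hφ : IsClosureOp φ)
    (hfin : Finitary φ) (hgeo : Geometric φ) :
    ∃ B, IsBase φ B ∧ (B ∩ {x | AlmostPrimeIn φ univ x}).encard =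
      min B.encard {x | AlmostPrimeIn φ univ x}.encard := by
  obtain ⟨B, hB, hBA | hAB⟩ := hgeo.exists_isBase_subset_or_superset hφ hfin
  · exact ⟨B, hB, by rw [inter_eq_left.2 hBA, min_eq_left (encard_le_encard hBA)]⟩
  · exact ⟨B, hB, by rw [inter_eq_right.2 hAB, min_eq_right (encard_le_encard hAB)]⟩

/-- in a geometric closure space where `U` is essential, all other
essential sets are pairwise incomparable, the set `A` of almost prime elements is
nonempty, and all bases have size `b`, there is a base `B*` with
`|B* ∩ A| = min b |A|`. -/
theorem statement19 {α : Type*} [Fintype α] (φ : Set α → Set α)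
    (hφ : IsClosureOp φ) (hstd : IsStandard φ) (hgeo : Geometric φ)
    (hUess : Essential φ (Set.univ : Set α))
    (hinc : ∀ C1 C2 : Set α, Essential φ C1 → Essential φ C2 →
      C1 ≠ Set.univ → C2 ≠ Set.univ → C1 ⊆ C2 → C1 = C2)
    (hA : {x : α | AlmostPrimeIn φ Set.univ x}.Nonempty)
    (b : ℕ)
    (hb : ∀ B : Set α,
      (φ B = Set.univ ∧ ∀ B' ⊆ B, φ B' = Set.univ → B' = B) → B.ncard = b) :
    ∃ B : Set α, (φ B = Set.univ ∧ ∀ B' ⊆ B, φ B' = Set.univ → B' = B) ∧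
      (B ∩ {x : α | AlmostPrimeIn φ Set.univ x}).ncard =
        min b {x : α | AlmostPrimeIn φ Set.univ x}.ncard := by
  obtain ⟨B, hB, hcard⟩ := statement19_general φ hφ (finitary_of_finite φ) hgeo
  refine ⟨B, hB, ?_⟩
  simp only [← (toFinite _).cast_ncard_eq, hb B hB, ← Nat.mono_cast.map_min] at hcard
  exact_mod_cast hcard

end EBaseFormal
end
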